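/- Let V ≥ 2 and let F = (F_1, …, F_V) be a probability vector with F_j > 0 for all j. For each ϖ > 0, let μ_ϖ denote the Poisson Pólya urn law PPU(ϖ, F) and let ν_ϖ denote the Dirichlet law Dir(ϖ, F) (defined via the normalized-Gamma representation), both regarded as probability measures on R^V. Then the Lévy–Prokhorov distance d_LP(μ_ϖ, ν_ϖ) tends to 0 as ϖ → ∞; in particular, the Poisson Pólya urn converges in distribution to the Dirichlet distribution. -/

import Mathlib

open MeasureTheory ProbabilityTheory Filter Real

/-- The Poisson Pólya urn law `PPU(ϖ, F)` on `ℝ^V`: the law of the normalized vector of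
independent Poisson counts with means `ϖ * F j`, conditional on the total count being positive. -/
noncomputable def ppu (V : ℕ) (ϖ : ℝ) (F : Fin V → ℝ) : Measure (Fin V → ℝ) :=
  Measure.map (fun γ : Fin V → ℕ => fun i => (γ i : ℝ) / ((∑ j, γ j : ℕ) : ℝ))
    ((Measure.pi fun j => poissonMeasure (ϖ * F j).toNNReal)[|{γ | 0 < ∑ j, γ j}])

/-- The Dirichlet law `Dir(ϖ, F)` on `ℝ^V`, via the normalized-Gamma representation:
the law of `(γ₁/T, …, γ_V/T)` for independent `γ_j ~ Gamma(ϖ F_j, 1)` and `T = ∑ γ_j`. -/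
noncomputable def dirichletLaw (V : ℕ) (ϖ : ℝ) (F : Fin V → ℝ) : Measure (Fin V → ℝ) :=
  Measure.map (fun γ : Fin V → ℝ => fun i => γ i / ∑ j, γ j)
    (Measure.pi fun j => gammaMeasure (ϖ * F j) 1)

/-!
The Poisson law and the unit-scale Gamma law of mean `ϖ * F j` both have variance `ϖ * F j`, so by
Chebyshev's inequality the coordinates divided by `ϖ` concentrate at `F`. Normalizing by the sum is
unaffected by the division by `ϖ` and is continuous at `F`, and the event that the total Poisson
count is positive has probability tending to one. Hence both laws converge to the point mass at `F`,
and their distance is at most the sum of their distances to it.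

The moments come from size-biasing: multiplying by the variable turns the Poisson weights into
their shift by one, and the Gamma density of shape `a` into that of shape `a + 1`.
-/

open scoped Topology

section Poisson

open scoped Nat NNReal

theorem integrable_poissonMeasure_zero {E : Type*} [NormedAddCommGroup E] (f : ℕ → E) :
    Integrable f (poissonMeasure 0) := by
  rw [integrable_poissonMeasure_iff]
  refine summable_of_ne_finset_zero (s := {0}) fun n hn ↦ ?_
  simp [show n ≠ 0 by simpa using hn]

theorem integral_natCast_smul_poissonMeasure {E : Type*} [NormedAddCommGroup E] [NormedSpace ℝ E]
    [FiniteDimensional ℝ E] (r : ℝ≥0) (f : ℕ → E) :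
    ∫ n, (n : ℝ) • f n ∂poissonMeasure r = (r : ℝ) • ∫ n, f (n + 1) ∂poissonMeasure r := by
  have hsupp : Function.support (fun n : ℕ ↦ (exp (-r) * r ^ n / n !) • ((n : ℝ) • f n)) ⊆
      Set.range Nat.succ := fun n hn ↦
    Set.mem_range.2 ⟨n.pred, Nat.succ_pred (by rintro rfl; simp at hn)⟩
  rw [integral_poissonMeasure, integral_poissonMeasure, ← Nat.succ_injective.tsum_eq hsupp,
    ← tsum_const_smul'']
  refine tsum_congr fun n ↦ ?_
  rw [smul_smul, smul_smul, Nat.succ_eq_add_one, Nat.factorial_succ]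
  congr 1
  push_cast
  field_simp
  ring

theorem integral_natCast_poissonMeasure (r : ℝ≥0) : ∫ n, (n : ℝ) ∂poissonMeasure r = r := by
  simpa using integral_natCast_smul_poissonMeasure r fun _ ↦ (1 : ℝ)

theorem integral_natCast_sq_poissonMeasure (r : ℝ≥0) :
    ∫ n, (n : ℝ) ^ 2 ∂poissonMeasure r = r * (r + 1) := by
  have hint : Integrable (fun n : ℕ ↦ (n : ℝ)) (poissonMeasure r) := by
    rcases eq_or_ne r 0 with rfl | hr
    · exact integrable_poissonMeasure_zero _
    · exact .of_integral_ne_zero (by simpa [integral_natCast_poissonMeasure] using hr)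
  calc ∫ n, (n : ℝ) ^ 2 ∂poissonMeasure r
      = r * ∫ n, ((n : ℝ) + 1) ∂poissonMeasure r := by
        simpa [sq] using integral_natCast_smul_poissonMeasure r fun n ↦ (n : ℝ)
    _ = r * (r + 1) := by
        rw [integral_add hint (integrable_const _), integral_natCast_poissonMeasure]
        simp

theorem memLp_two_natCast_poissonMeasure (r : ℝ≥0) :
    MemLp (fun n : ℕ ↦ (n : ℝ)) 2 (poissonMeasure r) := by
  refine (memLp_two_iff_integrable_sq .of_discrete).2 ?_
  rcases eq_or_ne r 0 with rfl | hr
  · exact integrable_poissonMeasure_zero _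
  · refine .of_integral_ne_zero ?_
    rw [integral_natCast_sq_poissonMeasure]
    positivity

theorem variance_natCast_poissonMeasure (r : ℝ≥0) :
    Var[fun n : ℕ ↦ (n : ℝ); poissonMeasure r] = r := by
  rw [variance_eq_sub (memLp_two_natCast_poissonMeasure r)]
  simp only [Pi.pow_apply]
  rw [integral_natCast_sq_poissonMeasure, integral_natCast_poissonMeasure]
  ring

end Poisson

section Gamma

theorem mul_gammaPDFReal {a r : ℝ} (ha : a ≠ 0) (hr : r ≠ 0) (x : ℝ) :
    x * gammaPDFReal a r x = a / r * gammaPDFReal (a + 1) r x := by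
  unfold gammaPDFReal
  split_ifs with hx
  · have hpow : x * x ^ (a - 1) = x ^ a := by
      rcases eq_or_ne x 0 with rfl | hx0
      · rw [zero_mul, zero_rpow ha]
      · rw [mul_comm, ← rpow_add_one hx0, sub_add_cancel]
    rw [Gamma_add_one ha, rpow_add_one hr, add_sub_cancel_right, ← hpow]
    field_simp
  · simp

theorem integral_gammaMeasure {E : Type*} [NormedAddCommGroup E] [NormedSpace ℝ E] {a r : ℝ}
    (ha : 0 < a) (hr : 0 < r) (f : ℝ → E) :
    ∫ x, f x ∂gammaMeasure a r = ∫ x, gammaPDFReal a r x • f x := by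
  have hmeas : Measurable (gammaPDF a r) := (measurable_gammaPDFReal a r).ennreal_ofReal
  rw [gammaMeasure, integral_withDensity_eq_integral_toReal_smul hmeas
    (ae_of_all _ fun _ ↦ ENNReal.ofReal_lt_top)]
  simp only [gammaPDF, ENNReal.toReal_ofReal (gammaPDFReal_nonneg ha hr _)]

theorem integral_smul_gammaMeasure {E : Type*} [NormedAddCommGroup E] [NormedSpace ℝ E] {a r : ℝ}
    (ha : 0 < a) (hr : 0 < r) (f : ℝ → E) :
    ∫ x, x • f x ∂gammaMeasure a r = (a / r) • ∫ x, f x ∂gammaMeasure (a + 1) r := by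
  rw [integral_gammaMeasure ha hr, integral_gammaMeasure (by positivity) hr, ← integral_smul]
  simp only [smul_smul, mul_comm (gammaPDFReal a r _), mul_gammaPDFReal ha.ne' hr.ne']

theorem integral_id_gammaMeasure {a r : ℝ} (ha : 0 < a) (hr : 0 < r) :
    ∫ x, x ∂gammaMeasure a r = a / r := by
  have := isProbabilityMeasure_gammaMeasure (add_pos ha one_pos) hr
  simpa using integral_smul_gammaMeasure ha hr fun _ ↦ (1 : ℝ)

theorem integral_sq_gammaMeasure {a r : ℝ} (ha : 0 < a) (hr : 0 < r) :
    ∫ x, x ^ 2 ∂gammaMeasure a r = a / r * ((a + 1) / r) := by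
  simp only [sq]
  rw [← integral_id_gammaMeasure (add_pos ha one_pos) hr]
  exact integral_smul_gammaMeasure ha hr id

theorem memLp_two_id_gammaMeasure {a r : ℝ} (ha : 0 < a) (hr : 0 < r) :
    MemLp id 2 (gammaMeasure a r) := by
  refine (memLp_two_iff_integrable_sq aestronglyMeasurable_id).2 (.of_integral_ne_zero ?_)
  simp only [id]
  rw [integral_sq_gammaMeasure ha hr]
  positivity

theorem variance_id_gammaMeasure {a r : ℝ} (ha : 0 < a) (hr : 0 < r) :
    Var[id; gammaMeasure a r] = a / r ^ 2 := by
  have := isProbabilityMeasure_gammaMeasure ha hr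
  rw [variance_eq_sub (memLp_two_id_gammaMeasure ha hr)]
  simp only [Pi.pow_apply, id]
  rw [integral_sq_gammaMeasure ha hr, integral_id_gammaMeasure ha hr]
  field_simp
  ring

end Gamma

/-- Convergence in probability to the constant `c`, along `l`, of random variables `X i` that may
live on different probability spaces `(Ω, P i)`: every neighbourhood of `c` eventually carries all
but an arbitrarily small part of the mass. The events are not assumed measurable, so that
post-composition with a map continuous at `c` preserves the property. -/
def TendstoInProb {ι Ω E : Type*} [MeasurableSpace Ω] [TopologicalSpace E] (P : ι → Measure Ω)
    (X : ι → Ω → E) (l : Filter ι) (c : E) : Prop :=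
  ∀ U ∈ 𝓝 c, Tendsto (fun i ↦ P i (X i ⁻¹' Uᶜ)) l (𝓝 0)

namespace TendstoInProb

section Topological

variable {ι Ω E : Type*} [MeasurableSpace Ω] [TopologicalSpace E] {P : ι → Measure Ω}
  {X : ι → Ω → E} {l : Filter ι} {c : E}

theorem comp_continuousAt {E' : Type*} [TopologicalSpace E'] {g : E → E'}
    (h : TendstoInProb P X l c) (hg : ContinuousAt g c) :
    TendstoInProb P (fun i ↦ g ∘ X i) l (g c) :=
  fun _ hU ↦ h _ (hg hU)

theorem tendsto_measure_preimage [∀ i, IsProbabilityMeasure (P i)] (h : TendstoInProb P X l c)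
    {U : Set E} (hU : U ∈ 𝓝 c) : Tendsto (fun i ↦ P i (X i ⁻¹' U)) l (𝓝 1) := by
  have hlower : Tendsto (fun i ↦ 1 - P i (X i ⁻¹' Uᶜ)) l (𝓝 1) := by
    simpa using ENNReal.Tendsto.sub tendsto_const_nhds (h U hU) (.inl ENNReal.one_ne_top)
  refine tendsto_of_tendsto_of_tendsto_of_le_of_le hlower tendsto_const_nhds (fun i ↦ ?_)
    fun i ↦ prob_le_one
  rw [Set.preimage_compl, tsub_le_iff_right, ← measure_univ (μ := P i),
    ← Set.union_compl_self (X i ⁻¹' U)]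
  exact measure_union_le _ _

theorem cond (h : TendstoInProb P X l c) {A : ι → Set Ω}
    (hA : Tendsto (fun i ↦ P i (A i)) l (𝓝 1)) :
    TendstoInProb (fun i ↦ (P i)[|A i]) X l c := by
  intro U hU
  have hupper : Tendsto (fun i ↦ (P i (A i))⁻¹ * P i (X i ⁻¹' Uᶜ)) l (𝓝 0) := by
    simpa using ENNReal.Tendsto.mul hA.inv (by simp) (h U hU) (by simp)
  refine tendsto_of_tendsto_of_tendsto_of_le_of_le tendsto_const_nhds hupper (fun _ ↦ zero_le)
    fun i ↦ ?_
  exact mul_le_mul_right (Measure.restrict_apply_le _ _) _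

end Topological

section Pi

variable {ι κ : Type*} [Fintype κ] {Ω E : κ → Type*} [∀ j, MeasurableSpace (Ω j)]
  [∀ j, TopologicalSpace (E j)] {P : ι → ∀ j, Measure (Ω j)} [∀ i j, IsProbabilityMeasure (P i j)]
  {X : ι → ∀ j, Ω j → E j} {l : Filter ι} {c : ∀ j, E j}

theorem pi (h : ∀ j, TendstoInProb (fun i ↦ P i j) (fun i ↦ X i j) l (c j)) :
    TendstoInProb (fun i ↦ Measure.pi (P i)) (fun i ω j ↦ X i j (ω j)) l c := by
  intro U hU
  rw [nhds_pi, Filter.mem_pi] at hU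
  obtain ⟨I, -, t, ht, hIt⟩ := hU
  have hsum : Tendsto (fun i ↦ ∑ j, P i j (X i j ⁻¹' (t j)ᶜ)) l (𝓝 0) := by
    simpa using tendsto_finsetSum Finset.univ fun j _ ↦ h j (t j) (ht j)
  refine tendsto_of_tendsto_of_tendsto_of_le_of_le tendsto_const_nhds hsum (fun _ ↦ zero_le)
    fun i ↦ ?_
  have hsub : (fun (ω : ∀ j, Ω j) j ↦ X i j (ω j)) ⁻¹' Uᶜ ⊆
      ⋃ j, Function.eval j ⁻¹' (X i j ⁻¹' (t j)ᶜ) := by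
    intro ω hω
    obtain ⟨j, -, hj⟩ : ∃ j ∈ I, X i j (ω j) ∉ t j := by
      simpa [Set.mem_pi] using fun hmem ↦ hω (hIt hmem)
    exact Set.mem_iUnion.2 ⟨j, hj⟩
  calc Measure.pi (P i) ((fun (ω : ∀ j, Ω j) j ↦ X i j (ω j)) ⁻¹' Uᶜ)
      ≤ ∑ j, Measure.pi (P i) (Function.eval j ⁻¹' (X i j ⁻¹' (t j)ᶜ)) :=
        (measure_mono hsub).trans (measure_iUnion_fintype_le _ _)
    _ ≤ ∑ j, P i j (X i j ⁻¹' (t j)ᶜ) := Finset.sum_le_sum fun j _ ↦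
        (Measure.le_map_apply (measurable_pi_apply j).aemeasurable _).trans_eq
          (by rw [(measurePreserving_eval (P i) j).map_eq])

end Pi

section Real

variable {ι Ω : Type*} [MeasurableSpace Ω] {P : ι → Measure Ω} [∀ i, IsFiniteMeasure (P i)]
  {l : Filter ι}

theorem of_variance {X : ι → Ω → ℝ} {c : ℝ} (hX : ∀ i, MemLp (X i) 2 (P i))
    (hmean : Tendsto (fun i ↦ ∫ ω, X i ω ∂P i) l (𝓝 c))
    (hvar : Tendsto (fun i ↦ Var[X i; P i]) l (𝓝 0)) : TendstoInProb P X l c := by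
  intro U hU
  obtain ⟨ε, hε, hεU⟩ := Metric.mem_nhds_iff.1 hU
  have hupper : Tendsto (fun i ↦ ENNReal.ofReal (Var[X i; P i] / (ε / 2) ^ 2)) l (𝓝 0) := by
    simpa using ENNReal.tendsto_ofReal (hvar.div_const ((ε / 2) ^ 2))
  refine tendsto_of_tendsto_of_tendsto_of_le_of_le' tendsto_const_nhds hupper
    (.of_forall fun _ ↦ zero_le) ?_
  filter_upwards [hmean (Metric.ball_mem_nhds c (half_pos hε))] with i hi
  refine (measure_mono fun ω hω ↦ ?_).trans (meas_ge_le_variance_div_sq (hX i) (half_pos hε))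
  have hfar : ε ≤ dist (X i ω) c := not_lt.1 fun hlt ↦ hω (hεU hlt)
  have hnear : dist (∫ ω, X i ω ∂P i) c < ε / 2 := hi
  have htri := dist_triangle (X i ω) (∫ ω, X i ω ∂P i) c
  rw [Set.mem_ofPred_eq, ← Real.dist_eq]
  linarith

theorem div_of_mean_variance {X : Ω → ℝ} {w : ι → ℝ} {m v : ℝ} (hw : ∀ i, w i ≠ 0)
    (hwl : Tendsto w l atTop) (hX : ∀ i, MemLp X 2 (P i)) (hmean : ∀ i, ∫ ω, X ω ∂P i = w i * m)
    (hvar : ∀ i, Var[X; P i] = w i * v) :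
    TendstoInProb P (fun i ω ↦ X ω / w i) l m := by
  refine of_variance (fun i ↦ ?_) ?_ ?_
  · simpa only [div_eq_mul_inv] using (hX i).mul_const (w i)⁻¹
  · simp only [integral_div, hmean, mul_div_cancel_left₀ _ (hw _), tendsto_const_nhds]
  · refine (hwl.const_div_atTop v).congr fun i ↦ ?_
    have := hw i
    simp only [div_eq_mul_inv, variance_mul_const, hvar]
    field_simp

end Real

end TendstoInProb

section LevyProkhorov

variable {E : Type*} [PseudoMetricSpace E] [MeasurableSpace E]

theorem levyProkhorovDist_nonneg (μ ν : Measure E) : 0 ≤ levyProkhorovDist μ ν :=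
  ENNReal.toReal_nonneg

variable [OpensMeasurableSpace E]

theorem levyProkhorovDist_dirac_le {μ : Measure E} [IsProbabilityMeasure μ] {c : E} {ε : ℝ}
    (hε : 0 ≤ ε) (hμ : μ (Metric.ball c ε)ᶜ ≤ ENNReal.ofReal ε) :
    levyProkhorovDist (Measure.dirac c) μ ≤ ε := by
  refine levyProkhorovDist_le_of_forall_le _ _ hε fun η B hη hB ↦ ?_
  by_cases hc : c ∈ B
  · have hball : Metric.ball c ε ⊆ Metric.thickening η B :=
      (Metric.ball_subset_ball hη.le).trans (Metric.ball_subset_thickening hc η)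
    calc Measure.dirac c B ≤ μ Set.univ := by simpa using prob_le_one
      _ ≤ μ (Metric.ball c ε) + μ (Metric.ball c ε)ᶜ := by
        rw [← Set.union_compl_self (Metric.ball c ε)]; exact measure_union_le _ _
      _ ≤ μ (Metric.thickening η B) + ENNReal.ofReal η := by
        gcongr
        exact hμ.trans (ENNReal.ofReal_le_ofReal hη.le)
  · simp [Measure.dirac_apply' c hB, hc]

theorem TendstoInProb.tendsto_levyProkhorovDist_dirac {ι Ω : Type*} [MeasurableSpace Ω]
    {P : ι → Measure Ω} [∀ i, IsProbabilityMeasure (P i)] {X : ι → Ω → E} {l : Filter ι} {c : E}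
    (h : TendstoInProb P X l c) (hX : ∀ i, AEMeasurable (X i) (P i)) :
    Tendsto (fun i ↦ levyProkhorovDist ((P i).map (X i)) (Measure.dirac c)) l (𝓝 0) := by
  refine Metric.nhds_basis_closedBall.tendsto_right_iff.2 fun ε hε ↦ ?_
  filter_upwards [(h _ (Metric.ball_mem_nhds c hε)).eventually_le_const
    (ENNReal.ofReal_pos.2 hε)] with i hi
  have := Measure.isProbabilityMeasure_map (hX i)
  rw [← Measure.map_apply_of_aemeasurable (hX i) Metric.isOpen_ball.measurableSet.compl] at hi
  rw [Metric.mem_closedBall, Real.dist_0_eq_abs, abs_of_nonneg (levyProkhorovDist_nonneg _ _),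
    levyProkhorovDist_comm]
  exact levyProkhorovDist_dirac_le hε.le hi

end LevyProkhorov

section SumNormalize

variable {κ : Type*} [Fintype κ]

/-- The vector `x` divided by the sum of its coordinates: the projection of the positive orthant to
the simplex through which both laws are defined. It is `0` if that sum vanishes. -/
noncomputable def sumNormalize (x : κ → ℝ) : κ → ℝ :=
  fun i ↦ x i / ∑ j, x j

theorem sumNormalize_div_const (x : κ → ℝ) {a : ℝ} (ha : a ≠ 0) :
    sumNormalize (fun j ↦ x j / a) = sumNormalize x := by
  ext i
  simp only [sumNormalize, ← Finset.sum_div, div_div_div_cancel_right₀ ha]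

theorem sumNormalize_of_sum_eq_one {x : κ → ℝ} (hx : ∑ j, x j = 1) : sumNormalize x = x := by
  ext i
  simp only [sumNormalize, hx, div_one]

theorem continuousAt_sumNormalize {x : κ → ℝ} (hx : ∑ j, x j ≠ 0) :
    ContinuousAt sumNormalize x :=
  continuousAt_pi.2 fun i ↦ (continuous_apply i).continuousAt.div
    (continuous_finsetSum _ fun j _ ↦ continuous_apply j).continuousAt hx

theorem measurable_sumNormalize : Measurable (sumNormalize : (κ → ℝ) → κ → ℝ) := by
  unfold sumNormalize
  fun_prop

theorem TendstoInProb.sumNormalize_of_div {ι Ω : Type*} [MeasurableSpace Ω] {P : ι → Measure Ω}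
    {X : Ω → κ → ℝ} {w : ι → ℝ} {l : Filter ι} {c : κ → ℝ} (hw : ∀ i, w i ≠ 0)
    (hc : ∑ j, c j = 1) (h : TendstoInProb P (fun i ω j ↦ X ω j / w i) l c) :
    TendstoInProb P (fun _ ω ↦ sumNormalize (X ω)) l c := by
  have hcomp := h.comp_continuousAt (continuousAt_sumNormalize (hc ▸ one_ne_zero))
  simpa only [Function.comp_def, sumNormalize_div_const _ (hw _),
    sumNormalize_of_sum_eq_one hc] using hcomp

end SumNormalize

section LargeWeight

variable {ι κ : Type*} [Fintype κ] {l : Filter ι} {w : ι → ℝ} {F : κ → ℝ}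

theorem tendstoInProb_pi_poissonMeasure_div (hw : ∀ i, 0 < w i) (hwl : Tendsto w l atTop)
    (hF : ∀ j, 0 ≤ F j) :
    TendstoInProb (fun i ↦ Measure.pi fun j ↦ poissonMeasure (w i * F j).toNNReal)
      (fun i (γ : κ → ℕ) j ↦ (γ j : ℝ) / w i) l F := by
  have hcoe (i : ι) (j : κ) : ((w i * F j).toNNReal : ℝ) = w i * F j :=
    Real.coe_toNNReal _ (mul_nonneg (hw i).le (hF j))
  refine TendstoInProb.pi (P := fun i j ↦ poissonMeasure (w i * F j).toNNReal)
    (X := fun i _ n ↦ (n : ℝ) / w i) fun j ↦ ?_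
  refine .div_of_mean_variance (v := F j) (fun i ↦ (hw i).ne') hwl
    (fun i ↦ memLp_two_natCast_poissonMeasure _) (fun i ↦ ?_) fun i ↦ ?_
  · rw [integral_natCast_poissonMeasure, hcoe]
  · rw [variance_natCast_poissonMeasure, hcoe]

theorem tendstoInProb_pi_gammaMeasure_div (hw : ∀ i, 0 < w i) (hwl : Tendsto w l atTop)
    (hF : ∀ j, 0 < F j) :
    TendstoInProb (fun i ↦ Measure.pi fun j ↦ gammaMeasure (w i * F j) 1)
      (fun i (γ : κ → ℝ) j ↦ γ j / w i) l F := by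
  have hpos (i : ι) (j : κ) : 0 < w i * F j := mul_pos (hw i) (hF j)
  have (i : ι) (j : κ) := isProbabilityMeasure_gammaMeasure (hpos i j) one_pos
  refine TendstoInProb.pi (P := fun i j ↦ gammaMeasure (w i * F j) 1)
    (X := fun i _ x ↦ x / w i) fun j ↦ ?_
  refine .div_of_mean_variance (X := id) (v := F j) (fun i ↦ (hw i).ne') hwl
    (fun i ↦ memLp_two_id_gammaMeasure (hpos i j) one_pos) (fun i ↦ ?_) fun i ↦ ?_
  · simp only [id, integral_id_gammaMeasure (hpos i j) one_pos, div_one]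
  · rw [variance_id_gammaMeasure (hpos i j) one_pos, one_pow, div_one]

theorem pi_poissonMeasure_sum_pos_ne_zero {r : κ → NNReal} {j : κ} (hj : r j ≠ 0) :
    (Measure.pi fun j ↦ poissonMeasure (r j)) {γ | 0 < ∑ j, γ j} ≠ 0 := by
  have hone : poissonMeasure (r j) {1} ≠ 0 := by
    rw [poissonMeasure_singleton]
    positivity
  rw [← (measurePreserving_eval (fun j ↦ poissonMeasure (r j)) j).measure_preimage
    (measurableSet_singleton 1).nullMeasurableSet] at hone
  refine fun hzero ↦ hone (measure_mono_null (fun γ (hγ : γ j = 1) ↦ ?_) hzero)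
  exact Finset.sum_pos' (fun _ _ ↦ Nat.zero_le _) ⟨j, Finset.mem_univ j, hγ ▸ one_pos⟩

theorem isProbabilityMeasure_cond_pi_poissonMeasure {ϖ : ℝ} (hϖ : 0 < ϖ) (hF : 0 < ∑ j, F j) :
    IsProbabilityMeasure
      ((Measure.pi fun j ↦ poissonMeasure (ϖ * F j).toNNReal)[|{γ | 0 < ∑ j, γ j}]) := by
  obtain ⟨j, -, hj⟩ := Finset.exists_lt_of_sum_lt (f := fun _ ↦ (0 : ℝ))
    (by simpa only [Finset.sum_const_zero] using hF)
  exact cond_isProbabilityMeasure (pi_poissonMeasure_sum_pos_ne_zero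
    (r := fun j ↦ (ϖ * F j).toNNReal) (Real.toNNReal_pos.2 (mul_pos hϖ hj)).ne')

theorem tendsto_pi_poissonMeasure_sum_pos (hw : ∀ i, 0 < w i) (hwl : Tendsto w l atTop)
    (hF : ∀ j, 0 ≤ F j) (hFsum : 0 < ∑ j, F j) :
    Tendsto (fun i ↦ (Measure.pi fun j ↦ poissonMeasure (w i * F j).toNNReal)
      {γ | 0 < ∑ j, γ j}) l (𝓝 1) := by
  have hsum := (tendstoInProb_pi_poissonMeasure_div hw hwl hF).comp_continuousAt
    (g := fun x ↦ ∑ j, x j) (by fun_prop)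
  refine (hsum.tendsto_measure_preimage (Ioi_mem_nhds hFsum)).congr fun i ↦ ?_
  congr 1 with γ
  have hscale : ∑ j, (γ j : ℝ) / w i = (∑ j, γ j : ℕ) / w i := by
    rw [Nat.cast_sum, Finset.sum_div]
  rw [Set.mem_preimage, Function.comp_apply, Set.mem_Ioi, hscale,
    div_pos_iff_of_pos_right (hw i), Nat.cast_pos, Set.mem_ofPred_eq]

end LargeWeight

section Dirac

variable {ι : Type*} {l : Filter ι} {w : ι → ℝ} {V : ℕ} {F : Fin V → ℝ}

theorem isProbabilityMeasure_ppu {ϖ : ℝ} (hϖ : 0 < ϖ) (hF : 0 < ∑ j, F j) :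
    IsProbabilityMeasure (ppu V ϖ F) := by
  have := isProbabilityMeasure_cond_pi_poissonMeasure hϖ hF
  exact Measure.isProbabilityMeasure_map (.of_discrete)

theorem isProbabilityMeasure_dirichletLaw {ϖ : ℝ} (hF : ∀ j, 0 < ϖ * F j) :
    IsProbabilityMeasure (dirichletLaw V ϖ F) := by
  have (j : Fin V) := isProbabilityMeasure_gammaMeasure (hF j) one_pos
  exact Measure.isProbabilityMeasure_map measurable_sumNormalize.aemeasurable

theorem tendsto_levyProkhorovDist_ppu_dirac (hw : ∀ i, 0 < w i) (hwl : Tendsto w l atTop)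
    (hF : ∀ j, 0 ≤ F j) (hFsum : ∑ j, F j = 1) :
    Tendsto (fun i ↦ levyProkhorovDist (ppu V (w i) F) (Measure.dirac F)) l (𝓝 0) := by
  have hsum : 0 < ∑ j, F j := hFsum ▸ one_pos
  have (i : ι) := isProbabilityMeasure_cond_pi_poissonMeasure (hw i) hsum
  have hcond := ((tendstoInProb_pi_poissonMeasure_div hw hwl hF).sumNormalize_of_div
    (fun i ↦ (hw i).ne') hFsum).cond (tendsto_pi_poissonMeasure_sum_pos hw hwl hF hsum)
  simp only [ppu, Nat.cast_sum]
  exact hcond.tendsto_levyProkhorovDist_dirac fun _ ↦ .of_discrete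

theorem tendsto_levyProkhorovDist_dirichletLaw_dirac (hw : ∀ i, 0 < w i)
    (hwl : Tendsto w l atTop) (hF : ∀ j, 0 < F j) (hFsum : ∑ j, F j = 1) :
    Tendsto (fun i ↦ levyProkhorovDist (dirichletLaw V (w i) F) (Measure.dirac F)) l (𝓝 0) := by
  have (i : ι) (j : Fin V) := isProbabilityMeasure_gammaMeasure (mul_pos (hw i) (hF j)) one_pos
  have hnorm := (tendstoInProb_pi_gammaMeasure_div hw hwl hF).sumNormalize_of_div
    (X := fun γ ↦ γ) (fun i ↦ (hw i).ne') hFsum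
  exact hnorm.tendsto_levyProkhorovDist_dirac fun _ ↦ measurable_sumNormalize.aemeasurable

end Dirac

/-- **Poisson Pólya Urn Asymptotic Convergence.** For a strictly positive probability vector `F`
on `V ≥ 2` categories, the Lévy–Prokhorov distance between `PPU(ϖ, F)` and `Dir(ϖ, F)` tends to
zero as `ϖ → ∞`; in particular the Poisson Pólya urn converges in distribution to the Dirichlet. -/
theorem ppu_levyProkhorov_tendsto_dirichlet
    (V : ℕ) (hV : 2 ≤ V) (F : Fin V → ℝ) (hFpos : ∀ j, 0 < F j) (hFsum : ∑ j, F j = 1) :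
    Tendsto (fun ϖ : ℝ => levyProkhorovDist (ppu V ϖ F) (dirichletLaw V ϖ F))
      atTop (nhds 0) := by
  rw [← tendsto_comp_val_Ioi_atTop (a := 0)]
  have hpos (ϖ : Set.Ioi (0 : ℝ)) : 0 < (ϖ : ℝ) := ϖ.2
  have hval : Tendsto (Subtype.val : Set.Ioi (0 : ℝ) → ℝ) atTop atTop :=
    tendsto_comp_val_Ioi_atTop.2 tendsto_id
  have hP := tendsto_levyProkhorovDist_ppu_dirac hpos hval (fun j ↦ (hFpos j).le) hFsum
  have hD := tendsto_levyProkhorovDist_dirichletLaw_dirac hpos hval hFpos hFsum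
  refine squeeze_zero (fun _ ↦ levyProkhorovDist_nonneg _ _) (fun ϖ ↦ ?_)
    (by simpa only [add_zero] using hP.add hD)
  have := isProbabilityMeasure_ppu (hpos ϖ) (hFsum ▸ one_pos)
  have := isProbabilityMeasure_dirichletLaw fun j ↦ mul_pos (hpos ϖ) (hFpos j)
  rw [levyProkhorovDist_comm (dirichletLaw V ϖ F)]
  exact levyProkhorovDist_triangle _ _ _
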